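/- arXiv:math/0409510 — 6 statements merged into one kernel-verified Lean document; each statement's English description precedes it below -/
import Mathlib

section
/- Let p be a natural number, let r and s be positive integers, and let S_1, …, S_s be nonempty, pairwise disjoint subsets of {1, …, r} whose union is all of {1, …, r}. For each j, let w_j ∈ (ℤ/pℤ)^r be the indicator vector of S_j (equal to 1 in the coordinates belonging to S_j and 0 elsewhere). Let W be the additive subgroup of (ℤ/pℤ)^r generated by w_1, …, w_s, and let G′ be an additive subgroup of (ℤ/pℤ)^r with W ⊊ G′. Then there exists e = (e_1, …, e_r) ∈ G′ with e ∉ W such that: (1) e_i = 0 for at least one index i, and (2) for every j ∈ {1, …, s} there exists i ∈ S_j with e_i ≠ 0. -/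
/-- If `w j` is the indicator of the fibre of `k` over `j`, then every function constant on the
fibres of `k` lies in the additive subgroup generated by the `w j`. -/
theorem comp_mem_closure_range_indicator {p : ℕ} {ι κ : Type*} [Fintype κ] [DecidableEq κ]
    (k : ι → κ) (w : κ → ι → ZMod p) (hw : ∀ j i, w j i = if k i = j then 1 else 0)
    (c : κ → ZMod p) : c ∘ k ∈ AddSubgroup.closure (Set.range w) := by
  have h : c ∘ k = ∑ j, c j • w j := by
    ext i
    simp [hw]
  rw [h]
  exact sum_mem fun j _ => ZMod.smul_mem (AddSubgroup.subset_closure (Set.mem_range_self j)) (c j)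

/-- **Combinatorial content of Lemma 2 (specialg).**
Let `p : ℕ`, `r, s` positive, and `S 1, …, S s` nonempty pairwise disjoint subsets of
`{1, …, r}` whose union is everything.  Let `w j ∈ (ℤ/pℤ)^r` be the indicator vector of
`S j`, `W` the additive subgroup generated by the `w j`, and `G'` an additive subgroup
strictly containing `W`.  Then there is `e ∈ G' \ W` with some coordinate `e i = 0` and,
for every `j`, some `i ∈ S j` with `e i ≠ 0`. -/
theorem stmt0 (p r s : ℕ) (hr : 0 < r) (hs : 0 < s)
    (S : Fin s → Finset (Fin r))
    (hne : ∀ j, (S j).Nonempty)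
    (hdisj : ∀ j j', j ≠ j' → Disjoint (S j) (S j'))
    (hunion : Finset.univ.biUnion S = Finset.univ)
    (w : Fin s → (Fin r → ZMod p))
    (hw : ∀ j i, w j i = if i ∈ S j then 1 else 0)
    (W G' : AddSubgroup (Fin r → ZMod p))
    (hW : W = AddSubgroup.closure (Set.range w))
    (hWG : W < G') :
    ∃ e : Fin r → ZMod p, e ∈ G' ∧ e ∉ W ∧
      (∃ i : Fin r, e i = 0) ∧
      (∀ j : Fin s, ∃ i ∈ S j, e i ≠ 0) := by
  have hcover : ∀ i, ∃ j, i ∈ S j := fun i => by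
    have hi := Finset.mem_univ i
    rw [← hunion] at hi
    simpa using hi
  choose k hk using hcover
  have hmem : ∀ i j, i ∈ S j ↔ k i = j := fun i j => by
    refine ⟨fun h => ?_, fun h => h ▸ hk i⟩
    by_contra hij
    exact Finset.disjoint_left.mp (hdisj _ _ hij) (hk i) h
  choose m hm using hne
  have hkm : ∀ j, k (m j) = j := fun j => (hmem _ _).mp (hm j)
  have hcomp : ∀ c : Fin s → ZMod p, c ∘ k ∈ W := fun c => by
    rw [hW]
    exact comp_mem_closure_range_indicator k w (by simpa only [hmem] using hw) c
  obtain ⟨hle, v, hvG, hvW⟩ := SetLike.lt_iff_le_and_exists.mp hWG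
  obtain ⟨a, ha⟩ : ∃ a, v a ≠ v (m (k a)) := by
    by_contra! h
    exact hvW ((funext h : v = (v ∘ m) ∘ k) ▸ hcomp (v ∘ m))
  have : Nontrivial (ZMod p) := ⟨_, _, ha⟩
  -- Translate by an element of `W` so that `a` gets value `0`, while every other block gets
  -- value `1` at its chosen representative.
  let c : Fin s → ZMod p := fun j => if j = k a then v a else v (m j) - 1
  refine ⟨v - c ∘ k, sub_mem hvG (hle (hcomp c)), fun h => hvW ?_, ⟨a, by simp [c]⟩,
    fun j => ⟨m j, hm j, ?_⟩⟩
  · simpa using add_mem h (hcomp c)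
  · by_cases hj : j = k a
    · subst hj
      simpa [c, hkm, sub_eq_zero] using ha.symm
    · simp [c, hkm, hj]
end

section
/- Let R be a unique factorization domain with fraction field K. Let f ∈ R[X] and suppose that in K[X] the image of f factors as f = g·h with g, h ∈ K[X] and g ≠ 0. Then the polynomial h·g′ (where g′ denotes the derivative of g with respect to X), which equals f·g′/g in K(X), has all its coefficients in R; that is, h·g′ is the image of a polynomial in R[X]. -/
open Polynomial

/-- Over the fraction field of a GCD domain, every polynomial is a constant times
the image of a primitive polynomial. -/
theorem exists_eq_C_mul_map_isPrimitive {R K : Type*} [CommRing R] [IsDomain R]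
    [NormalizedGCDMonoid R] [Field K] [Algebra R K] [IsFractionRing R K] (g : K[X]) :
    ∃ (c : K) (p : R[X]), p.IsPrimitive ∧ g = C c * p.map (algebraMap R K) := by
  obtain ⟨b, hb, hbg⟩ :=
    IsLocalization.integerNormalization_spec (nonZeroDivisors R) g
  set q := IsLocalization.integerNormalization (nonZeroDivisors R) g
  have hb0 : algebraMap R K b ≠ 0 := IsFractionRing.to_map_ne_zero_of_mem_nonZeroDivisors hb
  refine ⟨(algebraMap R K b)⁻¹ * algebraMap R K q.content, q.primPart,
    q.isPrimitive_primPart, ?_⟩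
  rw [C_mul, mul_assoc, ← map_C, ← Polynomial.map_mul, ← q.eq_C_content_mul_primPart, hbg,
    algebra_compatible_smul K, smul_eq_C_mul, ← mul_assoc, ← C_mul, inv_mul_cancel₀ hb0,
    C_1, one_mul]

/-- **Integrality of Φ (Section 3.1).**
If `R` is a UFD with fraction field `K`, `f ∈ R[X]`, and `f = g·h` in `K[X]` with
`g ≠ 0`, then `h·g′ = f·g′/g` has all its coefficients in `R`, i.e. it is the image
of a polynomial with coefficients in `R`. -/
theorem stmt1 (R K : Type*) [CommRing R] [IsDomain R] [UniqueFactorizationMonoid R]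
    [Field K] [Algebra R K] [IsFractionRing R K]
    (f : R[X]) (g h : K[X]) (hg : g ≠ 0)
    (hfactor : f.map (algebraMap R K) = g * h) :
    ∃ F : R[X], F.map (algebraMap R K) = h * derivative g := by
  obtain ⟨_⟩ : Nonempty (NormalizedGCDMonoid R) := inferInstance
  obtain ⟨c, p, hp, rfl⟩ := exists_eq_C_mul_map_isPrimitive (R := R) g
  have hlift : p.map (algebraMap R K) * (C c * h) ∈ lifts (algebraMap R K) :=
    (mem_lifts _).2 ⟨f, by rw [hfactor]; ring⟩
  obtain ⟨q, hq⟩ := (mem_lifts _).1 (hp.map_mul_mem_lifts_iff.1 hlift)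
  refine ⟨q * derivative p, ?_⟩
  rw [Polynomial.map_mul, hq, derivative_C_mul, derivative_map]
  ring
end

section
/- Let k be a field of characteristic p ≥ 0, and let f ∈ k[X] be separable, i.e. f and its derivative f′ are coprime. Write f = c·f_1⋯f_r with c ∈ k nonzero and f_1, …, f_r distinct monic irreducible polynomials in k[X]. Then for any integers e_1, …, e_r and any index i ∈ {1, …, r}, the polynomial f_i divides Σ_{j=1}^r e_j · c · f_j′ · ∏_{l≠j} f_l in k[X] if and only if p divides e_i (where for p = 0 this means e_i = 0). -/
open Polynomial Finset

/-- Among the terms `a j * ∏_{l ≠ j} F l`, only the `i`-th one matters modulo `F i`. -/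
theorem dvd_sum_mul_prod_erase_iff {R ι : Type*} [CommRing R] [Fintype ι] [DecidableEq ι]
    (F a : ι → R) (i : ι) :
    F i ∣ ∑ j, a j * ∏ l ∈ univ.erase j, F l ↔ F i ∣ a i * ∏ l ∈ univ.erase i, F l := by
  rw [← add_sum_erase univ _ (mem_univ i)]
  refine dvd_add_left (dvd_sum fun j hj => Dvd.dvd.mul_left ?_ _)
  exact dvd_prod_of_mem F (mem_erase.2 ⟨(ne_of_mem_erase hj).symm, mem_univ i⟩)

/-- **Divisibility criterion (key step of Lemma 2).**
Let `k` be a field of characteristic `p ≥ 0` and `f = c·f₁⋯f_r ∈ k[X]` separable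
(coprime to its derivative), with the `f_j` distinct monic irreducibles.  For integers
`e₁, …, e_r` and an index `i`, the local factor `f i` divides
`Σ_j e_j · c · f_j′ · ∏_{l ≠ j} f_l` if and only if `p ∣ e_i`
(for `p = 0` this means `e_i = 0`). -/
theorem stmt2 (k : Type*) [Field k] (p : ℕ) [CharP k p]
    (r : ℕ) (c : k) (hc : c ≠ 0) (F : Fin r → k[X])
    (hmonic : ∀ j, (F j).Monic) (hirr : ∀ j, Irreducible (F j))
    (hdist : Function.Injective F)
    (f : k[X]) (hf : f = C c * ∏ j, F j)
    (hsep : IsCoprime f (derivative f))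
    (e : Fin r → ℤ) (i : Fin r) :
    F i ∣ (∑ j, e j • (C c * derivative (F j) * ∏ l ∈ univ.erase j, F l)) ↔
      (p : ℤ) ∣ e i := by
  have hderiv : derivative f = ∑ j, C c * derivative (F j) * ∏ l ∈ univ.erase j, F l := by
    rw [hf, derivative_C_mul, derivative_prod_finset, mul_sum]
    exact sum_congr rfl fun j _ => by ring
  have hnot : ¬ F i ∣ C c * derivative (F i) * ∏ l ∈ univ.erase i, F l := by
    rw [← dvd_sum_mul_prod_erase_iff F (fun j => C c * derivative (F j)), ← hderiv]
    intro h
    have hif : F i ∣ f := hf ▸ (dvd_prod_of_mem F (mem_univ i)).mul_left _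
    exact (hirr i).not_isUnit (hsep.isUnit_of_dvd' hif h)
  simp_rw [← smul_mul_assoc (e _) (C c * derivative (F _))]
  rw [dvd_sum_mul_prod_erase_iff F (fun j => e j • (C c * derivative (F j))),
    smul_mul_assoc, ← CharP.intCast_eq_zero_iff k p, zsmul_eq_mul, ← map_intCast (C : k →+* k[X])]
  refine ⟨fun h => ?_, fun h => by simp [h]⟩
  by_contra he
  exact hnot ((isUnit_C.2 (Ne.isUnit he)).dvd_mul_left.1 h)
end

section
/- Let f ∈ ℤ[X] have degree n ≥ 1 and let g ∈ ℚ[X] be a nonzero divisor of f in ℚ[X], say f = g·h with h ∈ ℚ[X]. Then the polynomial h·g′ (g′ the derivative of g) has all coefficients in ℤ, has degree at most n−1, and satisfies ‖h·g′‖₂ ≤ 2^{n−1} · n · ‖f‖₂, where ‖·‖₂ denotes the Euclidean norm (square root of the sum of the squares of the coefficients). -/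
open Polynomial Finset

/-- The Euclidean (`L²`) norm of the coefficient vector of a rational polynomial. -/
noncomputable def polyNorm2 (f : Polynomial ℚ) : ℝ :=
  Real.sqrt (∑ i ∈ range (f.natDegree + 1), ((f.coeff i : ℝ)) ^ 2)

/-- Gauss's lemma for a factorization over `ℚ` of an integer polynomial: up to moving a rational
constant `c` from one factor to the other, both factors are integral. -/
theorem exists_int_factors_of_map_eq_mul {f : ℤ[X]} {g h : ℚ[X]} (hg : g ≠ 0)
    (hfactor : f.map (Int.castRingHom ℚ) = g * h) :
    ∃ (c : ℚ) (p q : ℤ[X]), p.map (Int.castRingHom ℚ) = C c * g ∧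
      h = C c * q.map (Int.castRingHom ℚ) := by
  obtain ⟨b, hb, hbg⟩ := IsLocalization.integerNormalization_spec (nonZeroDivisors ℤ) g
  set G := IsLocalization.integerNormalization (nonZeroDivisors ℤ) g
  have hb0 : (b : ℚ) ≠ 0 := Int.cast_ne_zero.mpr (nonZeroDivisors.ne_zero hb)
  have hG : G.map (Int.castRingHom ℚ) = C (b : ℚ) * g := by
    rw [← smul_eq_C_mul, Int.cast_smul_eq_zsmul]
    exact hbg
  have hG0 : G ≠ 0 := by
    rintro h0
    rw [h0, Polynomial.map_zero] at hG
    exact mul_ne_zero (C_ne_zero.mpr hb0) hg hG.symm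
  have hcont : (G.content : ℚ) ≠ 0 := Int.cast_ne_zero.mpr (content_eq_zero_iff.not.mpr hG0)
  have hprim : G.primPart.map (Int.castRingHom ℚ) = C ((b : ℚ) / G.content) * g := by
    have hG' : G.map (Int.castRingHom ℚ) =
        C (G.content : ℚ) * G.primPart.map (Int.castRingHom ℚ) := by
      conv_lhs => rw [G.eq_C_content_mul_primPart]
      simp
    refine mul_left_cancel₀ (C_ne_zero.mpr hcont) ?_
    rw [← hG', hG, ← mul_assoc, ← C_mul, mul_div_cancel₀ _ hcont]
  have hc : (b : ℚ) / G.content ≠ 0 := div_ne_zero hb0 hcont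
  obtain ⟨q, hq⟩ : G.primPart ∣ f := by
    rw [IsPrimitive.Int.dvd_iff_map_cast_dvd_map_cast _ _ G.isPrimitive_primPart, hprim, hfactor]
    exact (isUnit_C.mpr hc.isUnit).mul_left_dvd.mpr (dvd_mul_right g h)
  refine ⟨_, G.primPart, q, hprim, mul_left_cancel₀ hg ?_⟩
  rw [← hfactor, hq, Polynomial.map_mul, hprim]
  ring

theorem exists_int_map_eq_mul_derivative {f : ℤ[X]} {g h : ℚ[X]} (hg : g ≠ 0)
    (hfactor : f.map (Int.castRingHom ℚ) = g * h) :
    ∃ F : ℤ[X], F.map (Int.castRingHom ℚ) = h * derivative g := by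
  obtain ⟨c, p, q, hp, hq⟩ := exists_int_factors_of_map_eq_mul hg hfactor
  refine ⟨q * derivative p, ?_⟩
  rw [Polynomial.map_mul, ← derivative_map, hp, hq, derivative_C_mul]
  ring

theorem natDegree_mul_derivative_le {R : Type*} [CommRing R] [IsDomain R] (g h : R[X]) :
    (h * derivative g).natDegree ≤ (g * h).natDegree - 1 := by
  rcases eq_or_ne (h * derivative g) 0 with h0 | h0
  · simp [h0]
  have hh : h ≠ 0 := left_ne_zero_of_mul h0
  have hg : g ≠ 0 := by
    rintro rfl
    simp at h0
  have hdeg : g.natDegree ≠ 0 := by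
    intro hd
    exact h0 (by rw [derivative_of_natDegree_zero hd, mul_zero])
  have := natDegree_derivative_lt hdeg
  rw [natDegree_mul hg hh, natDegree_mul hh (right_ne_zero_of_mul h0)]
  omega

/-- Removing a linear factor does not increase the Mahler measure. -/
theorem mahlerMeasure_le_mahlerMeasure_X_sub_C_mul (a : ℂ) (p : ℂ[X]) :
    p.mahlerMeasure ≤ ((X - C a) * p).mahlerMeasure := by
  rw [mahlerMeasure_mul, mahlerMeasure_X_sub_C]
  exact le_mul_of_one_le_left p.mahlerMeasure_nonneg (le_max_left _ _)

theorem norm_coeff_mul_derivative_le (k : ℕ) (g h : ℂ[X]) (hgh : g * h ≠ 0) :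
    ‖(h * derivative g).coeff k‖ ≤
      g.natDegree * (((g * h).natDegree - 1).choose k * (g * h).mahlerMeasure) := by
  induction hd : g.natDegree generalizing g h with
  | zero => simp [derivative_of_natDegree_zero hd]
  | succ d ih =>
    obtain ⟨a, ha⟩ := Complex.exists_root (f := g) (natDegree_pos_iff_degree_pos.mp (by omega))
    obtain ⟨q, rfl⟩ := dvd_iff_isRoot.mpr ha
    have hq : q ≠ 0 := by
      rintro rfl
      simp at hgh
    have hassoc : (X - C a) * q * h = q * ((X - C a) * h) := by ring
    have hqd : q.natDegree = d := by
      rw [natDegree_mul (X_sub_C_ne_zero a) hq, natDegree_X_sub_C] at hd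
      omega
    have hrest := ih q ((X - C a) * h) (hassoc ▸ hgh) hqd
    have hdeg : ((X - C a) * q * h).natDegree - 1 = (h * q).natDegree := by
      rw [mul_assoc, mul_comm q h, natDegree_mul (X_sub_C_ne_zero a)
        (mul_ne_zero (right_ne_zero_of_mul hgh) hq), natDegree_X_sub_C]
      omega
    have hfirst : ‖(h * q).coeff k‖ ≤ (((X - C a) * q * h).natDegree - 1).choose k *
        ((X - C a) * q * h).mahlerMeasure := by
      refine (norm_coeff_le_choose_mul_mahlerMeasure k (h * q)).trans ?_
      rw [hdeg, mul_assoc (X - C a), mul_comm q h]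
      gcongr
      exact mahlerMeasure_le_mahlerMeasure_X_sub_C_mul a _
    have hsplit : h * derivative ((X - C a) * q) = h * q + (X - C a) * h * derivative q := by
      rw [derivative_mul, derivative_X_sub_C]
      ring
    rw [← hassoc] at hrest
    rw [hsplit, coeff_add]
    refine (norm_add_le _ _).trans ((add_le_add hfirst hrest).trans_eq ?_)
    push_cast
    ring

theorem sum_range_choose_sq_le (m : ℕ) :
    ∑ k ∈ range (m + 1), ((m.choose k : ℝ)) ^ 2 ≤ (2 ^ m) ^ 2 := by
  refine (sum_sq_le_sq_sum_of_nonneg fun _ _ ↦ Nat.cast_nonneg _).trans_eq ?_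
  rw [← Nat.cast_sum, Nat.sum_range_choose]
  push_cast
  rfl

/-- Landau's inequality for rational polynomials. -/
theorem mahlerMeasure_map_le_polyNorm2 (p : ℚ[X]) :
    (p.map (algebraMap ℚ ℂ)).mahlerMeasure ≤ polyNorm2 p := by
  refine (mahlerMeasure_le_sqrt_sum_sq_norm_coeff _).trans (Real.sqrt_le_sqrt ?_)
  have hnorm (i : ℕ) : ‖(p.map (algebraMap ℚ ℂ)).coeff i‖ ^ 2 = ((p.coeff i : ℝ)) ^ 2 := by
    simp [coeff_map]
  simp only [hnorm]
  refine sum_le_sum_of_subset_of_nonneg ?_ fun _ _ _ ↦ sq_nonneg _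
  exact (support_map_subset _ _).trans supp_subset_range_natDegree_succ

theorem polyNorm2_mul_derivative_le (g h : ℚ[X]) (hgh : g * h ≠ 0) :
    polyNorm2 (h * derivative g) ≤
      2 ^ ((g * h).natDegree - 1) * ((g * h).natDegree : ℝ) * polyNorm2 (g * h) := by
  set m := (g * h).natDegree - 1 with hm
  set N := (g * h).natDegree
  have hnorm : 0 ≤ polyNorm2 (g * h) := Real.sqrt_nonneg _
  have hgN : g.natDegree ≤ N :=
    natDegree_le_of_dvd (dvd_mul_right g h) hgh
  have hcoeff (k : ℕ) : |((h * derivative g).coeff k : ℝ)| ≤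
      m.choose k * (N * polyNorm2 (g * h)) := by
    have hmap : g.map (algebraMap ℚ ℂ) * h.map (algebraMap ℚ ℂ) = (g * h).map (algebraMap ℚ ℂ) :=
      (Polynomial.map_mul _).symm
    have hbound := norm_coeff_mul_derivative_le k (g.map (algebraMap ℚ ℂ))
      (h.map (algebraMap ℚ ℂ)) (by rw [hmap]; exact map_ne_zero hgh)
    rw [hmap, derivative_map, ← Polynomial.map_mul, coeff_map, natDegree_map, natDegree_map,
      ← hm] at hbound
    calc |((h * derivative g).coeff k : ℝ)|
        = ‖algebraMap ℚ ℂ ((h * derivative g).coeff k)‖ := by simp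
      _ ≤ g.natDegree * (m.choose k * ((g * h).map (algebraMap ℚ ℂ)).mahlerMeasure) := hbound
      _ ≤ N * (m.choose k * polyNorm2 (g * h)) := by
        gcongr
        · exact mul_nonneg (Nat.cast_nonneg _) (mahlerMeasure_nonneg _)
        · exact mahlerMeasure_map_le_polyNorm2 _
      _ = m.choose k * (N * polyNorm2 (g * h)) := by ring
  refine Real.sqrt_le_iff.mpr ⟨by positivity, ?_⟩
  calc ∑ k ∈ range ((h * derivative g).natDegree + 1), (((h * derivative g).coeff k : ℝ)) ^ 2
      ≤ ∑ k ∈ range (m + 1), (((h * derivative g).coeff k : ℝ)) ^ 2 :=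
        sum_le_sum_of_subset_of_nonneg
          (range_subset_range.mpr (Nat.succ_le_succ (natDegree_mul_derivative_le g h)))
          fun _ _ _ ↦ sq_nonneg _
    _ ≤ ∑ k ∈ range (m + 1), (m.choose k * (N * polyNorm2 (g * h))) ^ 2 :=
        sum_le_sum fun k _ ↦ sq_le_sq.mpr ((hcoeff k).trans (le_abs_self _))
    _ = (∑ k ∈ range (m + 1), ((m.choose k : ℝ)) ^ 2) * (N * polyNorm2 (g * h)) ^ 2 := by
        simp only [mul_pow, sum_mul]
    _ ≤ (2 ^ m) ^ 2 * (N * polyNorm2 (g * h)) ^ 2 := by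
        gcongr
        exact sum_range_choose_sq_le m
    _ = (2 ^ m * N * polyNorm2 (g * h)) ^ 2 := by ring

/-- **Corollary 4.**
Let `f ∈ ℤ[X]` have degree `n ≥ 1` and `g` a nonzero divisor of `f` in `ℚ[X]` with
cofactor `h` (so `f = g·h` in `ℚ[X]`).  Then `Φ(g) = h·g′` has integer coefficients,
degree at most `n - 1`, and `‖h·g′‖₂ ≤ 2^(n-1) · n · ‖f‖₂`. -/
theorem stmt4 (f : Polynomial ℤ) (g h : Polynomial ℚ) (n : ℕ)
    (hn : n = f.natDegree) (hn1 : 1 ≤ n) (hg : g ≠ 0)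
    (hfactor : f.map (Int.castRingHom ℚ) = g * h) :
    (∃ F : Polynomial ℤ, F.map (Int.castRingHom ℚ) = h * derivative g) ∧
    (h * derivative g).natDegree ≤ n - 1 ∧
    polyNorm2 (h * derivative g) ≤
      2 ^ (n - 1) * (n : ℝ) * polyNorm2 (f.map (Int.castRingHom ℚ)) := by
  have hN : n = (g * h).natDegree := by
    rw [← hfactor, hn, natDegree_map_eq_of_injective (RingHom.injective_int _)]
  have hgh : g * h ≠ 0 := by
    intro h0
    rw [h0, natDegree_zero] at hN
    omega
  refine ⟨exists_int_map_eq_mul_derivative hg hfactor, ?_, ?_⟩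
  · rw [hN]
    exact natDegree_mul_derivative_le g h
  · rw [hfactor, hN]
    exact polyNorm2_mul_derivative_le g h hgh
end

section
/- Let k be a field and let f be a nonzero polynomial in k[t][X] (polynomials in X whose coefficients are polynomials in t). Suppose f = g·h with g, h ∈ k[t][X] and g ≠ 0. Write h·g′ = Σ_{i=0}^{n−1} a_i(t) X^i, where g′ is the derivative of g with respect to X. Then deg_t(a_i) ≤ deg_t(f) for every i, where deg_t(F) denotes the maximum of the t-degrees of the X-coefficients of F ∈ k[t][X]. -/
open Polynomial

/-- For `F ∈ k[t][X]` (a polynomial in `X` with coefficients in `k[t]`), `degT F`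
is the maximum of the `t`-degrees of the `X`-coefficients of `F`. -/
noncomputable def degT {k : Type*} [Field k] (F : Polynomial (Polynomial k)) : ℕ :=
  F.support.sup fun i => (F.coeff i).natDegree

theorem coeff_coeff_swap {k : Type*} [Field k] (F : Polynomial (Polynomial k)) (i j : ℕ) :
    ((Bivariate.swap F).coeff j).coeff i = (F.coeff i).coeff j := by
  induction F using Polynomial.induction_on' with
  | add p q hp hq => simp [hp, hq]
  | monomial n a =>
    induction a using Polynomial.induction_on' with
    | add p q hp hq => simp only [map_add, coeff_add, hp, hq]
    | monomial m r =>
      rw [Bivariate.swap_monomial_monomial]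
      simp only [coeff_monomial]
      split_ifs <;> simp_all [coeff_monomial]

theorem degT_le_iff {k : Type*} [Field k] {F : Polynomial (Polynomial k)} {d : ℕ} :
    degT F ≤ d ↔ ∀ i, (F.coeff i).natDegree ≤ d := by
  refine Finset.sup_le_iff.trans ⟨fun H i => ?_, fun H i _ => H i⟩
  by_cases hi : F.coeff i = 0
  · simp [hi]
  · exact H i (mem_support_iff.mpr hi)

theorem degT_eq_natDegree_swap {k : Type*} [Field k] (F : Polynomial (Polynomial k)) :
    degT F = (Bivariate.swap F).natDegree := by
  refine eq_of_forall_ge_iff fun d => ?_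
  simp only [degT_le_iff, natDegree_le_iff_coeff_eq_zero, Polynomial.ext_iff,
    coeff_coeff_swap, coeff_zero]
  exact ⟨fun H N hN i => H i N hN, fun H i N hN => H N hN i⟩

theorem degT_mul_le {k : Type*} [Field k] (F G : Polynomial (Polynomial k)) :
    degT (F * G) ≤ degT F + degT G := by
  simpa only [degT_eq_natDegree_swap, map_mul] using natDegree_mul_le

theorem degT_mul {k : Type*} [Field k] {F G : Polynomial (Polynomial k)}
    (hF : F ≠ 0) (hG : G ≠ 0) : degT (F * G) = degT F + degT G := by
  simp only [degT_eq_natDegree_swap, map_mul]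
  exact natDegree_mul (by simpa using hF) (by simpa using hG)

theorem degT_derivative_le {k : Type*} [Field k] (F : Polynomial (Polynomial k)) :
    degT (derivative F) ≤ degT F := by
  refine degT_le_iff.mpr fun i => ?_
  rw [coeff_derivative, ← Nat.cast_succ]
  refine natDegree_mul_le.trans ?_
  rw [natDegree_natCast, add_zero]
  exact degT_le_iff.mp le_rfl (i + 1)

/-- **Lemma 8 (logboundp).**
Let `f` be a nonzero polynomial in `k[t][X]` and `f = g·h` with `g ≠ 0`.
Writing `h·g′ = Σ a_i(t) X^i` (derivative with respect to `X`), one has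
`deg_t(a_i) ≤ deg_t(f)` for every `i`. -/
theorem stmt8 (k : Type*) [Field k] (f g h : Polynomial (Polynomial k))
    (hf : f ≠ 0) (hg : g ≠ 0) (hfactor : f = g * h) :
    ∀ i : ℕ, ((h * derivative g).coeff i).natDegree ≤ degT f := by
  subst hfactor
  refine degT_le_iff.mp ?_
  calc degT (h * derivative g) ≤ degT h + degT (derivative g) := degT_mul_le _ _
    _ ≤ degT h + degT g := by gcongr; exact degT_derivative_le g
    _ = degT (g * h) := by rw [degT_mul hg (right_ne_zero_of_mul hf), add_comm]
end

section
/- Let k be a field and let f, g, h ∈ k[x, y] be nonzero polynomials with f = g·h and ∂g/∂y ≠ 0. Then every exponent vector of h·(∂g/∂y) lies in N(f) + (0, −1); that is, for every pair (a, b) such that the coefficient of x^a y^b in h·(∂g/∂y) is nonzero, the point (a, b+1) lies in the Newton polygon N(f) ⊂ ℝ². -/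
open MvPolynomial

/-- The Newton polygon of a bivariate polynomial `F ∈ k[x, y]`: the convex hull in `ℝ²`
of the exponent vectors `(i, j)` of the monomials `x^i y^j` occurring in `F`. -/
noncomputable def newtonPolygon {k : Type*} [Field k] (F : MvPolynomial (Fin 2) k) :
    Set (ℝ × ℝ) :=
  convexHull ℝ {q : ℝ × ℝ | ∃ m ∈ F.support, q = ((m 0 : ℝ), (m 1 : ℝ))}

/-- The exponent vectors of a product attain at least the sum of the values which an additive
functional takes on exponent vectors of the two factors. -/
theorem exists_mem_support_mul_add_le {σ R : Type*} [CommSemiring R] [NoZeroDivisors R]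
    (φ : (σ →₀ ℕ) →+ ℝ) {p q : MvPolynomial σ R} {m n : σ →₀ ℕ}
    (hm : m ∈ p.support) (hn : n ∈ q.support) :
    ∃ c ∈ (p * q).support, φ m + φ n ≤ φ c := by
  classical
  obtain ⟨m', hm', hmax⟩ := p.support.exists_max_image φ ⟨m, hm⟩
  obtain ⟨n', hn', hnax⟩ := q.support.exists_max_image φ ⟨n, hn⟩
  obtain ⟨s, hs, t, ht, hu⟩ := UniqueSums.uniqueAdd_of_nonempty
    (A := p.support.filter fun s ↦ φ s = φ m') (B := q.support.filter fun t ↦ φ t = φ n')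
    ⟨m', by simp [hm']⟩ ⟨n', by simp [hn']⟩
  obtain ⟨hsp, hsm⟩ := Finset.mem_filter.1 hs
  obtain ⟨htq, htn⟩ := Finset.mem_filter.1 ht
  have hu' : UniqueAdd p.support q.support s t := by
    intro a b ha hb hab
    have hsum : φ a + φ b = φ s + φ t := by rw [← map_add, hab, map_add]
    have := hmax a ha
    have := hnax b hb
    exact hu (Finset.mem_filter.2 ⟨ha, by linarith⟩) (Finset.mem_filter.2 ⟨hb, by linarith⟩) hab
  refine ⟨s + t, ?_, ?_⟩
  · have hcoeff : coeff (s + t) (p * q) = coeff s p * coeff t q :=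
      AddMonoidAlgebra.coeff_mul_add_of_uniqueAdd hu'
    rw [mem_support_iff, hcoeff]
    exact mul_ne_zero (mem_support_iff.1 hsp) (mem_support_iff.1 htq)
  · rw [map_add, hsm, htn]
    exact add_le_add (hmax m hm) (hnax n hn)

/-- The Newton polygon of a product contains all sums of exponent vectors of its factors. -/
theorem add_mem_newtonPolygon_mul {k : Type*} [Field k] {p q : MvPolynomial (Fin 2) k}
    {m n : Fin 2 →₀ ℕ} (hm : m ∈ p.support) (hn : n ∈ q.support) :
    ((m 0 : ℝ) + n 0, (m 1 : ℝ) + n 1) ∈ newtonPolygon (p * q) := by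
  by_contra hmem
  have hfin : {v : ℝ × ℝ | ∃ c ∈ (p * q).support, v = ((c 0 : ℝ), (c 1 : ℝ))}.Finite := by
    refine ((p * q).support.finite_toSet.image fun c ↦ ((c 0 : ℝ), (c 1 : ℝ))).subset ?_
    rintro _ ⟨c, hc, rfl⟩
    exact ⟨c, hc, rfl⟩
  obtain ⟨L, u, hL, hu⟩ := geometric_hahn_banach_closed_point (convex_convexHull ℝ _)
    (hfin.isClosed_convexHull ℝ) hmem
  let φ : (Fin 2 →₀ ℕ) →+ ℝ :=
    { toFun := fun c ↦ L ((c 0 : ℝ), (c 1 : ℝ))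
      map_zero' := by simp [← Prod.zero_eq_mk]
      map_add' := fun a b ↦ by simp [← map_add] }
  obtain ⟨c, hc, hle⟩ := exists_mem_support_mul_add_le φ hm hn
  have hlt : φ c < u := hL _ (subset_convexHull ℝ _ ⟨c, hc, rfl⟩)
  have heq : φ m + φ n = L ((m 0 : ℝ) + n 0, (m 1 : ℝ) + n 1) := by simp [φ, ← map_add]
  linarith

/-- If `m` is an exponent vector of `∂p/∂xᵢ`, then `m + eᵢ` is an exponent vector of `p`. -/
theorem add_single_mem_support_of_mem_support_pderiv {σ R : Type*} [CommSemiring R] {i : σ}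
    {p : MvPolynomial σ R} {m : σ →₀ ℕ} (hm : m ∈ (pderiv i p).support) :
    m + Finsupp.single i 1 ∈ p.support := by
  classical
  rw [mem_support_iff] at hm ⊢
  contrapose! hm
  simp [coeff_pderiv, hm]

/-- **The final Lemma of the paper (Newton-polygon bound for Φ(g)).**
Let `k` be a field and `f = g·h` nonzero in `k[x, y]` with `∂g/∂y ≠ 0`.  Then every
exponent vector `(a, b)` of `h·(∂g/∂y)` satisfies `(a, b+1) ∈ N(f)`; that is, the
exponent vectors of `h·∂_y g` lie in `N(f) + {(0, −1)}`. -/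
theorem stmt12 (k : Type*) [Field k] (f g h : MvPolynomial (Fin 2) k)
    (hf : f ≠ 0) (hg : g ≠ 0) (hh : h ≠ 0)
    (hfactor : f = g * h) (hdg : pderiv 1 g ≠ 0) :
    ∀ a b : ℕ,
      MvPolynomial.coeff (Finsupp.single 0 a + Finsupp.single 1 b) (h * pderiv 1 g) ≠ 0 →
        ((a : ℝ), (b : ℝ) + 1) ∈ newtonPolygon f := by
  classical
  intro a b hab
  obtain ⟨n, hn, m, hm, hnm⟩ :=
    Finset.mem_add.1 (support_mul _ _ (mem_support_iff.2 hab))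
  have hx : n 0 + m 0 = a := by simpa using DFunLike.congr_fun hnm 0
  have hy : n 1 + m 1 = b := by simpa using DFunLike.congr_fun hnm 1
  have key := add_mem_newtonPolygon_mul (add_single_mem_support_of_mem_support_pderiv hm) hn
  rw [hfactor]
  convert key using 2
  · simp [← hx, add_comm]
  · simp [← hy]
    ring
end
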